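/- Let n ≥ 1, let A be a positive definite real symmetric n×n matrix, let h ∈ ℝⁿ with h ≠ 0, and let λ > 0. Set q = hᵀA⁻¹h and p* = (λ − 1/q)⁺. Then for every p ≥ 0, log det(A + p·hhᵀ) − p/λ ≤ log det(A + p*·hhᵀ) − p*/λ. -/

import Mathlib

open Matrix

/-!
By the matrix determinant lemma, `log det (A + p • u vᵀ) = log det A + log (1 + p q)` with
`q = vᵀA⁻¹u`, so only the concave function `p ↦ log (1 + p q) - p / lam` has to be maximized. For a
concave objective on `p ≥ 0` the KKT conditions are sufficient, because the graph lies below its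
tangent at `p*`. They hold at the water-filling power since `1 + p* q = max (lam q) 1`.
-/

section DeterminantLemma

variable {n R : Type*} [Fintype n] [DecidableEq n] [CommRing R] {A : Matrix n n R}

lemma det_add_vecMulVec (hA : IsUnit A.det) (u v : n → R) :
    (A + vecMulVec u v).det = A.det * (1 + v ⬝ᵥ A⁻¹ *ᵥ u) := by
  rw [vecMulVec_eq Unit, det_add_replicateCol_mul_replicateRow hA, det_unique (n := Unit),
    Matrix.add_apply, one_apply_eq, Matrix.mul_assoc, ← replicateCol_mulVec,
    replicateRow_mul_replicateCol_apply]

lemma det_add_smul_vecMulVec (hA : IsUnit A.det) (c : R) (u v : n → R) :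
    (A + c • vecMulVec u v).det = A.det * (1 + c * (v ⬝ᵥ A⁻¹ *ᵥ u)) := by
  rw [← smul_vecMulVec, det_add_vecMulVec hA, mulVec_smul, dotProduct_smul, smul_eq_mul]

end DeterminantLemma

lemma log_sub_log_le_sub_div {x y : ℝ} (hx : 0 < x) (hy : 0 < y) :
    Real.log x - Real.log y ≤ (x - y) / y :=
  calc Real.log x - Real.log y
    _ = Real.log (x / y) := (Real.log_div hx.ne' hy.ne').symm
    _ ≤ x / y - 1 := Real.log_le_sub_one_of_pos (div_pos hx hy)
    _ = (x - y) / y := by rw [sub_div, div_self hy.ne']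

section ScalarChannel

variable {q lam : ℝ}

/-- In the KKT conditions `q / (1 + p₀ q)` is the marginal rate at `p₀` and `c` the price of
power: `marginal_le` is dual feasibility, `slackness` is complementary slackness. -/
lemma isMaxOn_log_one_add_mul_sub_of_kkt {c p₀ : ℝ} (hq : 0 ≤ q) (hp₀ : 0 ≤ p₀)
    (marginal_le : q / (1 + p₀ * q) ≤ c) (slackness : p₀ * (q / (1 + p₀ * q)) = p₀ * c) :
    IsMaxOn (fun p ↦ Real.log (1 + p * q) - p * c) (Set.Ici 0) p₀ := by
  refine isMaxOn_iff.2 fun p (hp : 0 ≤ p) ↦ ?_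
  have tangent : Real.log (1 + p * q) - Real.log (1 + p₀ * q) ≤ p * c - p₀ * c :=
    calc Real.log (1 + p * q) - Real.log (1 + p₀ * q)
      _ ≤ ((1 + p * q) - (1 + p₀ * q)) / (1 + p₀ * q) :=
          log_sub_log_le_sub_div (by positivity) (by positivity)
      _ = p * (q / (1 + p₀ * q)) - p₀ * (q / (1 + p₀ * q)) := by ring
      _ ≤ p * c - p₀ * c := by rw [slackness]; gcongr
  linarith

/-- The water-filling power `(lam - 1 / q)⁺` of a scalar channel with gain `q` and water level
`lam`, where `1 / q` is the noise floor. It is meant for `q > 0`: at `q = 0` the convention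
`1 / 0 = 0` gives `lam⁺`, not the optimal power `0`. -/
noncomputable def waterFillingPower (lam q : ℝ) : ℝ := max (lam - 1 / q) 0

lemma waterFillingPower_nonneg : 0 ≤ waterFillingPower lam q := le_max_right _ _

lemma one_add_waterFillingPower_mul (hq : 0 < q) :
    1 + waterFillingPower lam q * q = max (lam * q) 1 := by
  rw [waterFillingPower, max_mul_of_nonneg _ _ hq.le, zero_mul, ← max_add_add_left, sub_mul,
    one_div_mul_cancel hq.ne', add_sub_cancel, add_zero]

lemma marginal_waterFillingPower_le (hq : 0 < q) (hlam : 0 < lam) :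
    q / (1 + waterFillingPower lam q * q) ≤ 1 / lam := by
  rw [one_add_waterFillingPower_mul hq, div_le_div_iff₀ (by positivity) hlam, one_mul, mul_comm]
  exact le_max_left _ _

lemma waterFillingPower_mul_marginal (hq : 0 < q) :
    waterFillingPower lam q * (q / (1 + waterFillingPower lam q * q)) =
      waterFillingPower lam q * (1 / lam) := by
  rcases le_total (lam * q) 1 with below_floor | above_floor
  · have power_zero : waterFillingPower lam q = 0 :=
      max_eq_right (sub_nonpos.2 ((le_div_iff₀ hq).2 below_floor))
    simp only [power_zero, zero_mul]
  · rw [one_add_waterFillingPower_mul hq, max_eq_left above_floor, div_mul_cancel_right₀ hq.ne',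
      one_div]

lemma isMaxOn_waterFillingPower (hq : 0 < q) (hlam : 0 < lam) :
    IsMaxOn (fun p ↦ Real.log (1 + p * q) - p / lam) (Set.Ici 0) (waterFillingPower lam q) := by
  simpa only [mul_one_div] using isMaxOn_log_one_add_mul_sub_of_kkt hq.le waterFillingPower_nonneg
    (marginal_waterFillingPower_le hq hlam) (waterFillingPower_mul_marginal hq)

end ScalarChannel

theorem stmt_16_general {n : Type*} [Fintype n] [DecidableEq n] {A : Matrix n n ℝ}
    (hA : 0 < A.det) {u v : n → ℝ} (hq : 0 < v ⬝ᵥ A⁻¹ *ᵥ u) {lam : ℝ} (hlam : 0 < lam) :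
    IsMaxOn (fun p : ℝ ↦ Real.log (A + p • vecMulVec u v).det - p / lam) (Set.Ici 0)
      (waterFillingPower lam (v ⬝ᵥ A⁻¹ *ᵥ u)) := by
  set q := v ⬝ᵥ A⁻¹ *ᵥ u
  have log_det {p : ℝ} (hp : 0 ≤ p) :
      Real.log (A + p • vecMulVec u v).det = Real.log A.det + Real.log (1 + p * q) := by
    rw [det_add_smul_vecMulVec hA.ne'.isUnit, Real.log_mul hA.ne' (by positivity)]
  refine isMaxOn_iff.2 fun p (hp : 0 ≤ p) ↦ ?_
  rw [log_det hp, log_det waterFillingPower_nonneg, add_sub_assoc, add_sub_assoc]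
  exact add_le_add_right (isMaxOn_iff.1 (isMaxOn_waterFillingPower hq hlam) p hp) _

/-- Pointwise Lagrangian maximization in the vector-channel water-filling problem:
with `q = hᵀA⁻¹h`, the power `p* = (λ − 1/q)⁺` maximizes
`p ↦ log det(A + p h hᵀ) − p/λ` over `p ≥ 0`. -/
theorem stmt_16 (n : ℕ) (hn : 1 ≤ n) (A : Matrix (Fin n) (Fin n) ℝ)
    (hA : A.PosDef) (h : Fin n → ℝ) (hh : h ≠ 0) (lam : ℝ) (hlam : 0 < lam)
    (q : ℝ) (hq : q = h ⬝ᵥ A⁻¹ *ᵥ h)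
    (pstar : ℝ) (hpstar : pstar = max (lam - 1 / q) 0) :
    ∀ p : ℝ, 0 ≤ p →
      Real.log (A + p • vecMulVec h h).det - p / lam ≤
        Real.log (A + pstar • vecMulVec h h).det - pstar / lam := by
  subst hq hpstar
  exact isMaxOn_iff.1 (stmt_16_general hA.det_pos (hA.inv.dotProduct_mulVec_pos hh) hlam)
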